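/- There exist absolute constants C > 0 and k ≥ 0 with the following property. Let t > 0, x ∈ ℝ², C_f > 0, and let K_g : [0,t] × ℝ² → [0,∞) be measurable such that for every a ∈ [0,t] the flux of K_g on the backward light cone with tip (a,x) is at most C_f. Then for every ε ∈ (0,1]: ∫₀ᵗ ∫_{|y−x| ≤ (1−ε)(t−s)} K_g(s,y)^{5/3} / ( (t−s) (1 − |ξ|²)^{7/6} ) dy ds ≤ C C_f^{5/6} (1+t)^k ε^{−1/6}, where ξ = (y−x)/(t−s). -/

import Mathlib

open MeasureTheory Set
open scoped NNReal ENNReal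

/-- The unit vector `(cos θ, sin θ) ∈ ℝ²`. -/
noncomputable def unitVec (θ : ℝ) : EuclideanSpace ℝ (Fin 2) :=
  (EuclideanSpace.equiv (Fin 2) ℝ).symm ![Real.cos θ, Real.sin θ]

/-- The flux `∫₀^a ∫₀^{2π} (a−s) K_g(s, x + (a−s)ω(θ))² dθ ds` of `K_g` on the backward
light cone with tip `(a, x)`. -/
noncomputable def coneFlux (Kg : ℝ → EuclideanSpace ℝ (Fin 2) → ℝ) (a : ℝ)
    (x : EuclideanSpace ℝ (Fin 2)) : ℝ≥0∞ :=
  ∫⁻ s in Ioc (0 : ℝ) a, ∫⁻ θ in Ioc (0 : ℝ) (2 * Real.pi),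
    ENNReal.ofReal ((a - s) * Kg s (x + (a - s) • unitVec θ) ^ 2)


lemma unitVec_norm (θ : ℝ) : ‖unitVec θ‖ = 1 := by
  simp [unitVec, EuclideanSpace.norm_eq]

lemma unitVec_continuous : Continuous unitVec := by
  unfold unitVec
  refine (EuclideanSpace.equiv (Fin 2) ℝ).symm.continuous.comp ?_
  refine continuous_pi fun i => ?_
  fin_cases i
  · exact Real.continuous_cos
  · exact Real.continuous_sin

lemma unitVec_periodic (θ : ℝ) : unitVec (θ + 2 * Real.pi) = unitVec θ := by
  simp [unitVec]

lemma polar_angle (g : ℝ → ℝ≥0∞) (hg : Function.Periodic g (2 * Real.pi)) :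
    ∫⁻ θ in Ioo (-Real.pi) Real.pi, g θ = ∫⁻ θ in Ioc 0 (2 * Real.pi), g θ := by
  rw [restrict_Ioo_eq_restrict_Ioc]
  have h1 := isAddFundamentalDomain_Ioc (T := 2 * Real.pi) (by positivity) (-Real.pi)
  have h2 := isAddFundamentalDomain_Ioc (T := 2 * Real.pi) (by positivity) 0
  have h3 := h1.setLIntegral_eq h2 g (by
    rintro ⟨v, hv⟩ x
    obtain ⟨n, rfl⟩ := AddSubgroup.mem_zmultiples_iff.1 hv
    change g (n • (2 * Real.pi) + x) = g x
    rw [add_comm]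
    exact hg.zsmul n x)
  have e1 : -Real.pi + 2 * Real.pi = Real.pi := by ring
  rwa [e1, zero_add] at h3

lemma polar_lintegral (x : EuclideanSpace ℝ (Fin 2)) (f : EuclideanSpace ℝ (Fin 2) → ℝ≥0∞)
    (hf : Measurable f) :
    ∫⁻ y, f y = ∫⁻ r in Ioi (0 : ℝ), ∫⁻ θ in Ioc (0 : ℝ) (2 * Real.pi),
      ENNReal.ofReal r * f (x + r • unitVec θ) := by
  have hm : Measurable fun p : ℝ × ℝ =>
      x + (EuclideanSpace.equiv (Fin 2) ℝ).symm ![p.1, p.2] := by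
    refine Continuous.measurable ?_
    refine continuous_const.add ((EuclideanSpace.equiv (Fin 2) ℝ).symm.continuous.comp ?_)
    refine continuous_pi fun i => ?_
    fin_cases i
    · exact continuous_fst
    · exact continuous_snd
  have h1 : ∫⁻ y, f y = ∫⁻ p : ℝ × ℝ, f (x + (EuclideanSpace.equiv (Fin 2) ℝ).symm ![p.1, p.2]) := by
    rw [← lintegral_add_left_eq_self f x]
    have hx : Measurable fun y => f (x + y) := hf.comp (measurable_const_add x)
    rw [← (PiLp.volume_preserving_toLp (Fin 2)).lintegral_comp hx]
    have hx2 : Measurable fun y : Fin 2 → ℝ => f (x + WithLp.toLp 2 y) :=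
      hx.comp (PiLp.volume_preserving_toLp (Fin 2)).measurable
    rw [← ((volume_preserving_finTwoArrow ℝ).symm).lintegral_comp hx2]
    rfl
  rw [h1, ← lintegral_comp_polarCoord_symm]
  have ht : polarCoord.target = Ioi (0 : ℝ) ×ˢ Ioo (-Real.pi) Real.pi := rfl
  rw [ht, Measure.volume_eq_prod, ← Measure.prod_restrict]
  have e : ∀ p : ℝ × ℝ, ENNReal.ofReal p.1 • f (x + (EuclideanSpace.equiv (Fin 2) ℝ).symm
      ![(polarCoord.symm p).1, (polarCoord.symm p).2])
      = ENNReal.ofReal p.1 * f (x + p.1 • unitVec p.2) := by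
    intro p
    rw [smul_eq_mul]
    congr 3
    ext i
    fin_cases i <;> simp [unitVec]
  simp_rw [e]
  rw [lintegral_prod]
  · refine lintegral_congr fun r => polar_angle _ fun θ => ?_
    simp only [unitVec_periodic]
  · refine Measurable.aemeasurable ?_
    refine (ENNReal.measurable_ofReal.comp measurable_fst).mul (hf.comp ?_)
    exact (continuous_const.add
      (continuous_fst.smul (unitVec_continuous.comp continuous_snd))).measurable

lemma rpow_lintegral_near (c : ℝ) (hc : 0 ≤ c) :
    ∫⁻ τ in Ioc (0 : ℝ) c, ENNReal.ofReal (τ ^ (-(2 / 3) : ℝ)) = ENNReal.ofReal (3 * c ^ (1 / 3 : ℝ)) := by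
  have hi : IntervalIntegrable (fun τ : ℝ => τ ^ (-(2 / 3) : ℝ)) volume 0 c :=
    intervalIntegral.intervalIntegrable_rpow' (by norm_num)
  rw [intervalIntegrable_iff_integrableOn_Ioc_of_le hc] at hi
  rw [← ofReal_integral_eq_lintegral_ofReal hi, ← intervalIntegral.integral_of_le hc,
    integral_rpow (Or.inl (by norm_num))]
  · congr 1
    norm_num
    ring
  · filter_upwards [ae_restrict_mem measurableSet_Ioc] with τ hτ
    exact Real.rpow_nonneg hτ.1.le _

lemma rpow_lintegral_far (c t : ℝ) (hc : 0 < c) (hct : c ≤ t) :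
    ∫⁻ τ in Ioc c t, ENNReal.ofReal (τ ^ (-(7 / 6) : ℝ)) ≤ ENNReal.ofReal (6 * c ^ (-(1 / 6) : ℝ)) := by
  have h0 : (0 : ℝ) ∉ Set.uIcc c t := by
    rw [uIcc_of_le hct]
    exact fun h => absurd h.1 (not_le.2 hc)
  have hi : IntervalIntegrable (fun τ : ℝ => τ ^ (-(7 / 6) : ℝ)) volume c t :=
    intervalIntegral.intervalIntegrable_rpow (Or.inr h0)
  rw [intervalIntegrable_iff_integrableOn_Ioc_of_le hct] at hi
  rw [← ofReal_integral_eq_lintegral_ofReal hi, ← intervalIntegral.integral_of_le hct,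
    integral_rpow (Or.inr ⟨by norm_num, h0⟩)]
  · apply ENNReal.ofReal_le_ofReal
    have := Real.rpow_nonneg (hc.le.trans hct) (-(1 / 6) : ℝ)
    have e : (-(7 / 6) + 1 : ℝ) = -(1 / 6) := by norm_num
    rw [e]
    linarith
  · filter_upwards [ae_restrict_mem measurableSet_Ioc] with τ hτ
    exact Real.rpow_nonneg (hc.le.trans hτ.1.le) _

lemma radial_bound (t ε : ℝ) (ht : 0 < t) (hε : 0 < ε) (hε1 : ε ≤ 1) :
    ∫⁻ τ in Ioc (0 : ℝ) t, ENNReal.ofReal (τ ^ (-(7 / 6) : ℝ) * (min t (τ / ε)) ^ (1 / 2 : ℝ))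
      ≤ ENNReal.ofReal (9 * t ^ (1 / 3 : ℝ) * ε ^ (-(1 / 6) : ℝ)) := by
  have hc : 0 < ε * t := by positivity
  have hct : ε * t ≤ t := by nlinarith
  rw [← Ioc_union_Ioc_eq_Ioc hc.le hct]
  refine (lintegral_union_le _ _ _).trans ?_
  have e0 : 9 * t ^ (1 / 3 : ℝ) * ε ^ (-(1 / 6) : ℝ) =
      ε ^ (-(1 / 2) : ℝ) * (3 * (ε * t) ^ (1 / 3 : ℝ))
       + t ^ (1 / 2 : ℝ) * (6 * (ε * t) ^ (-(1 / 6) : ℝ)) := by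
    rw [Real.mul_rpow hε.le ht.le, Real.mul_rpow hε.le ht.le]
    have a1 : ε ^ (-(1 / 2) : ℝ) * ε ^ (1 / 3 : ℝ) = ε ^ (-(1 / 6) : ℝ) := by
      rw [← Real.rpow_add hε]; norm_num
    have a2 : t ^ (1 / 2 : ℝ) * t ^ (-(1 / 6) : ℝ) = t ^ (1 / 3 : ℝ) := by
      rw [← Real.rpow_add ht]; norm_num
    linear_combination (-3 * t ^ (1 / 3 : ℝ)) * a1 - 6 * ε ^ (-(1 / 6) : ℝ) * a2
  rw [e0, ENNReal.ofReal_add (by positivity) (by positivity)]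
  refine add_le_add ?_ ?_
  · rw [ENNReal.ofReal_mul (by positivity), ← rpow_lintegral_near _ hc.le,
      ← lintegral_const_mul' _ _ ENNReal.ofReal_ne_top]
    refine setLIntegral_mono' measurableSet_Ioc fun τ hτ => ?_
    have hτ0 := hτ.1
    rw [← ENNReal.ofReal_mul (by positivity)]
    apply ENNReal.ofReal_le_ofReal
    calc _ ≤ τ ^ (-(7 / 6) : ℝ) * (τ / ε) ^ (1 / 2 : ℝ) := by
          gcongr
          exact min_le_right _ _
      _ = _ := by
          rw [Real.div_rpow hτ0.le hε.le, Real.rpow_neg hε.le]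
          have : τ ^ (-(7 / 6) : ℝ) * τ ^ (1 / 2 : ℝ) = τ ^ (-(2 / 3) : ℝ) := by
            rw [← Real.rpow_add hτ0]; norm_num
          rw [← this]
          ring
  · rw [ENNReal.ofReal_mul (by positivity)]
    refine le_trans ?_ (mul_le_mul_right (rpow_lintegral_far _ _ hc hct) _)
    rw [← lintegral_const_mul' _ _ ENNReal.ofReal_ne_top]
    refine setLIntegral_mono' measurableSet_Ioc fun τ hτ => ?_
    have hτ0 := hc.trans hτ.1
    rw [← ENNReal.ofReal_mul (by positivity), mul_comm]
    apply ENNReal.ofReal_le_ofReal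
    gcongr
    exact min_le_left _ _

lemma weight_bound (t ε a : ℝ) (ht : 0 < t) (hε : 0 < ε) (ha : a < t) :
    ∫⁻ s in Ioc (0 : ℝ) a, {s : ℝ | ε * (t - s) ≤ t - a}.indicator
      (fun s => ENNReal.ofReal ((a - s) * (t - s))) s
      ≤ ENNReal.ofReal ((min t ((t - a) / ε)) ^ 3) := by
  set M := min t ((t - a) / ε) with hM
  have hM0 : 0 ≤ M := le_min ht.le (div_nonneg (by linarith) hε.le)
  calc _ ≤ ∫⁻ s in Ioc (0 : ℝ) a, (Icc (t - M) t).indicator (fun _ => ENNReal.ofReal (M ^ 2)) s := by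
        refine setLIntegral_mono' measurableSet_Ioc fun s hs => ?_
        by_cases h : ε * (t - s) ≤ t - a
        · have h2 : t - s ≤ M := by
            refine le_min (by linarith [hs.1]) ?_
            rw [le_div_iff₀ hε]; linarith
          have h3 : s ∈ Icc (t - M) t := ⟨by linarith, by linarith [hs.2]⟩
          rw [indicator_of_mem h3, indicator_of_mem (by exact h)]
          apply ENNReal.ofReal_le_ofReal
          have := hs.2
          nlinarith
        · rw [indicator_of_notMem (by exact h)]
          exact zero_le
    _ ≤ ∫⁻ s, (Icc (t - M) t).indicator (fun _ => ENNReal.ofReal (M ^ 2)) s :=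
        setLIntegral_le_lintegral _ _
    _ = ENNReal.ofReal (M ^ 3) := by
        rw [lintegral_indicator_const measurableSet_Icc, Real.volume_Icc,
          ← ENNReal.ofReal_mul (by positivity)]
        congr 1
        ring

lemma pointwise_bound (K T r : ℝ) (hK : 0 ≤ K) (hr : 0 < r) (hrT : r < T) :
    r * (K ^ ((5 : ℝ) / 3) / (T * (1 - (r / T) ^ 2) ^ ((7 : ℝ) / 6)))
      ≤ (r * K ^ 2) ^ (5 / 6 : ℝ) * (r * T) ^ (1 / 6 : ℝ) * (T - r) ^ (-(7 / 6) : ℝ) := by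
  have hT : 0 < T := hr.trans hrT
  have hd : 0 < T - r := by linarith
  have h1 : (T - r) / T ≤ 1 - (r / T) ^ 2 := by
    have : r / T < 1 := (div_lt_one hT).2 hrT
    have h0 : 0 < r / T := by positivity
    rw [sub_div, div_self hT.ne']
    nlinarith
  have h2 : 0 < (T - r) / T := by positivity
  have e1 : (r * K ^ 2) ^ (5 / 6 : ℝ) = r ^ (5 / 6 : ℝ) * K ^ ((5 : ℝ) / 3) := by
    rw [Real.mul_rpow hr.le (by positivity), ← Real.rpow_natCast, ← Real.rpow_mul hK]
    norm_num
  have e2 : r ^ (5 / 6 : ℝ) * r ^ (1 / 6 : ℝ) = r := by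
    rw [← Real.rpow_add hr]; norm_num
  have e3 : T * ((T - r) / T) ^ ((7 : ℝ) / 6) = (T ^ (1 / 6 : ℝ) * (T - r) ^ (-(7 / 6) : ℝ))⁻¹ := by
    rw [Real.div_rpow hd.le hT.le, Real.rpow_neg hd.le]
    have : T ^ ((7 : ℝ) / 6) = T * T ^ (1 / 6 : ℝ) := by
      nth_rewrite 2 [← Real.rpow_one T]
      rw [← Real.rpow_add hT]; norm_num
    rw [this]
    have : 0 < T ^ (1 / 6 : ℝ) := by positivity
    have : 0 < (T - r) ^ ((7 : ℝ) / 6) := by positivity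
    field_simp
  calc _ ≤ r * (K ^ ((5 : ℝ) / 3) / (T * ((T - r) / T) ^ ((7 : ℝ) / 6))) := by gcongr
    _ = _ := by
      rw [e3, e1, Real.mul_rpow hr.le hT.le, div_inv_eq_mul]
      nth_rewrite 1 [← e2]
      ring

lemma measurable_cone (Kg : ℝ → EuclideanSpace ℝ (Fin 2) → ℝ)
    (hK : Measurable (Function.uncurry Kg)) (x : EuclideanSpace ℝ (Fin 2)) :
    Measurable fun p : (ℝ × ℝ) × ℝ =>
      ENNReal.ofReal ((p.1.2 - p.1.1) * Kg p.1.1 (x + (p.1.2 - p.1.1) • unitVec p.2) ^ 2) := by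
  have h1 : Measurable fun p : (ℝ × ℝ) × ℝ => x + (p.1.2 - p.1.1) • unitVec p.2 := by
    have := unitVec_continuous
    exact Continuous.measurable (by fun_prop)
  have h2 : Measurable fun p : (ℝ × ℝ) × ℝ => Kg p.1.1 (x + (p.1.2 - p.1.1) • unitVec p.2) :=
    hK.comp ((measurable_fst.comp measurable_fst).prodMk h1)
  fun_prop

lemma measurable_weight (t ε : ℝ) :
    Measurable fun p : ℝ × ℝ => {s : ℝ | ε * (t - s) ≤ t - p.2}.indicator
      (fun s => ENNReal.ofReal ((p.2 - s) * (t - s))) p.1 := by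
  have : (fun p : ℝ × ℝ => {s : ℝ | ε * (t - s) ≤ t - p.2}.indicator
      (fun s => ENNReal.ofReal ((p.2 - s) * (t - s))) p.1) =
      {p : ℝ × ℝ | ε * (t - p.1) ≤ t - p.2}.indicator
        (fun p => ENNReal.ofReal ((p.2 - p.1) * (t - p.1))) := rfl
  rw [this]
  refine Measurable.indicator (by fun_prop) (measurableSet_le (by fun_prop) (by fun_prop))

lemma cone_bound (Kg : ℝ → EuclideanSpace ℝ (Fin 2) → ℝ)
    (hK : Measurable (Function.uncurry Kg)) (x : EuclideanSpace ℝ (Fin 2))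
    (t ε a Cf : ℝ) (ht : 0 < t) (hε : 0 < ε) (ha : a < t)
    (hf : coneFlux Kg a x ≤ ENNReal.ofReal Cf) :
    ∫⁻ s in Ioc (0 : ℝ) a, ∫⁻ θ in Ioc (0 : ℝ) (2 * Real.pi),
      ENNReal.ofReal ((a - s) * Kg s (x + (a - s) • unitVec θ) ^ 2) ^ (5 / 6 : ℝ) *
      ({s : ℝ | ε * (t - s) ≤ t - a}.indicator
        (fun s => ENNReal.ofReal ((a - s) * (t - s))) s) ^ (1 / 6 : ℝ)
      ≤ ENNReal.ofReal Cf ^ (5 / 6 : ℝ) * (ENNReal.ofReal ((2 * Real.pi) ^ (1 / 6 : ℝ)) *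
        ENNReal.ofReal ((min t ((t - a) / ε)) ^ (1 / 2 : ℝ))) := by
  have mH : Measurable fun p : ℝ × ℝ =>
      ENNReal.ofReal ((a - p.1) * Kg p.1 (x + (a - p.1) • unitVec p.2) ^ 2) :=
    (measurable_cone Kg hK x).comp
      (f := fun p : ℝ × ℝ => ((p.1, a), p.2)) (by fun_prop)
  have mG : Measurable fun p : ℝ × ℝ => {s : ℝ | ε * (t - s) ≤ t - a}.indicator
      (fun s => ENNReal.ofReal ((a - s) * (t - s))) p.1 :=
    (measurable_weight t ε).comp (f := fun p : ℝ × ℝ => (p.1, a)) (by fun_prop)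
  have hM0 : 0 ≤ min t ((t - a) / ε) := le_min ht.le (div_nonneg (by linarith) hε.le)
  rw [lintegral_lintegral ((mH.pow_const _).mul (mG.pow_const _)).aemeasurable]
  refine (ENNReal.lintegral_mul_norm_pow_le mH.aemeasurable mG.aemeasurable (by norm_num)
    (by norm_num) (by norm_num)).trans ?_
  refine mul_le_mul' ?_ ?_
  · refine ENNReal.rpow_le_rpow ?_ (by norm_num)
    rw [lintegral_prod _ mH.aemeasurable]
    exact hf
  · rw [lintegral_prod _ mG.aemeasurable]
    simp only [lintegral_const, Measure.restrict_apply MeasurableSet.univ, univ_inter,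
      Real.volume_Ioc, sub_zero]
    rw [lintegral_mul_const' _ _ ENNReal.ofReal_ne_top]
    refine (ENNReal.rpow_le_rpow (mul_le_mul_left (weight_bound t ε a ht hε ha) _)
      (by norm_num)).trans ?_
    rw [ENNReal.mul_rpow_of_nonneg _ _ (by norm_num), mul_comm,
      ENNReal.ofReal_rpow_of_nonneg (by positivity) (by norm_num),
      ENNReal.ofReal_rpow_of_nonneg (by positivity) (by norm_num), ← Real.rpow_natCast,
      ← Real.rpow_mul hM0]
    norm_num

/-- The majorant after the change of variables `a = s + r`. -/
noncomputable def majorant (Kg : ℝ → EuclideanSpace ℝ (Fin 2) → ℝ)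
    (x : EuclideanSpace ℝ (Fin 2)) (t ε s a : ℝ) : ℝ≥0∞ :=
  {p : ℝ × ℝ | 0 < p.1 ∧ p.1 ≤ p.2 ∧ p.2 < t}.indicator (fun p =>
    ∫⁻ θ in Ioc (0 : ℝ) (2 * Real.pi),
      ENNReal.ofReal ((t - p.2) ^ (-(7 / 6) : ℝ)) *
      (ENNReal.ofReal ((p.2 - p.1) * Kg p.1 (x + (p.2 - p.1) • unitVec θ) ^ 2) ^ (5 / 6 : ℝ) *
      ({s : ℝ | ε * (t - s) ≤ t - p.2}.indicator
        (fun s => ENNReal.ofReal ((p.2 - s) * (t - s))) p.1) ^ (1 / 6 : ℝ))) (s, a)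

lemma measurable_majorant (Kg : ℝ → EuclideanSpace ℝ (Fin 2) → ℝ)
    (hK : Measurable (Function.uncurry Kg)) (x : EuclideanSpace ℝ (Fin 2)) (t ε : ℝ) :
    Measurable (Function.uncurry (majorant Kg x t ε)) := by
  unfold majorant
  change Measurable ({p : ℝ × ℝ | 0 < p.1 ∧ p.1 ≤ p.2 ∧ p.2 < t}.indicator _)
  refine Measurable.indicator ?_ ?_
  · refine Measurable.lintegral_prod_right' (f := fun q : (ℝ × ℝ) × ℝ =>
      ENNReal.ofReal ((t - q.1.2) ^ (-(7 / 6) : ℝ)) *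
      (ENNReal.ofReal ((q.1.2 - q.1.1) * Kg q.1.1 (x + (q.1.2 - q.1.1) • unitVec q.2) ^ 2)
        ^ (5 / 6 : ℝ) *
      ({s : ℝ | ε * (t - s) ≤ t - q.1.2}.indicator
        (fun s => ENNReal.ofReal ((q.1.2 - s) * (t - s))) q.1.1) ^ (1 / 6 : ℝ))) ?_
    refine Measurable.mul (by fun_prop) (Measurable.mul
      ((measurable_cone Kg hK x).pow_const _)
      (((measurable_weight t ε).comp measurable_fst).pow_const _))
  · have m1 : MeasurableSet {p : ℝ × ℝ | 0 < p.1} :=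
      measurableSet_lt measurable_const measurable_fst
    have m2 : MeasurableSet {p : ℝ × ℝ | p.1 ≤ p.2} :=
      measurableSet_le measurable_fst measurable_snd
    have m3 : MeasurableSet {p : ℝ × ℝ | p.2 < t} :=
      measurableSet_lt measurable_snd measurable_const
    exact m1.inter (m2.inter m3)

lemma slice_bound (Kg : ℝ → EuclideanSpace ℝ (Fin 2) → ℝ)
    (hK : Measurable (Function.uncurry Kg)) (hK0 : ∀ s y, 0 ≤ Kg s y)
    (x : EuclideanSpace ℝ (Fin 2)) (t ε s : ℝ) (hε : 0 < ε) (hs : 0 < s) (hst : s < t) :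
    ∫⁻ y in {y | dist y x ≤ (1 - ε) * (t - s)},
      ENNReal.ofReal (Kg s y ^ ((5 : ℝ) / 3) /
        ((t - s) * (1 - (dist y x / (t - s)) ^ 2) ^ ((7 : ℝ) / 6)))
      ≤ ∫⁻ a, majorant Kg x t ε s a := by
  have hS : MeasurableSet {y | dist y x ≤ (1 - ε) * (t - s)} :=
    measurableSet_le (by fun_prop) (by fun_prop)
  have hKs : Measurable (Kg s) := hK.comp measurable_prodMk_left
  rw [← lintegral_indicator hS, polar_lintegral x _ (Measurable.indicator (by fun_prop) hS),
    ← lintegral_indicator measurableSet_Ioi, ← lintegral_sub_right_eq_self _ s]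
  refine lintegral_mono fun a => ?_
  by_cases hr : 0 < a - s
  swap
  · rw [indicator_of_notMem (by exact hr)]
    exact zero_le
  rw [indicator_of_mem (by exact hr)]
  have hd : ∀ θ, dist (x + (a - s) • unitVec θ) x = a - s := fun θ => by
    rw [dist_eq_norm, add_sub_cancel_left, norm_smul, unitVec_norm, mul_one, Real.norm_eq_abs,
      abs_of_pos hr]
  by_cases hc : a - s ≤ (1 - ε) * (t - s)
  swap
  · have h0 : ∀ θ, x + (a - s) • unitVec θ ∉ {y | dist y x ≤ (1 - ε) * (t - s)} := fun θ h => by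
      rw [mem_ofPred_eq, hd] at h
      exact hc h
    simp only [indicator_of_notMem (h0 _), mul_zero, lintegral_zero]
    exact zero_le
  have hts : 0 < t - s := by linarith
  have hpos : 0 < ε * (t - s) := by positivity
  have hat : a < t := by nlinarith
  have h1 : ∀ θ, x + (a - s) • unitVec θ ∈ {y | dist y x ≤ (1 - ε) * (t - s)} := fun θ => by
    rw [mem_ofPred_eq, hd]
    exact hc
  have h2 : (s, a) ∈ {p : ℝ × ℝ | 0 < p.1 ∧ p.1 ≤ p.2 ∧ p.2 < t} :=
    ⟨hs, by change s ≤ a; linarith, hat⟩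
  have h3 : s ∈ {s : ℝ | ε * (t - s) ≤ t - a} := by
    change ε * (t - s) ≤ t - a
    linarith
  unfold majorant
  rw [indicator_of_mem h2]
  refine lintegral_mono fun θ => ?_
  simp only [indicator_of_mem (h1 _), indicator_of_mem h3, hd]
  have p1 : 0 ≤ (a - s) * Kg s (x + (a - s) • unitVec θ) ^ 2 := by positivity
  have p2 : 0 ≤ (a - s) * (t - s) := by positivity
  rw [← ENNReal.ofReal_mul hr.le, ENNReal.ofReal_rpow_of_nonneg p1 (by norm_num),
    ENNReal.ofReal_rpow_of_nonneg p2 (by norm_num), ← ENNReal.ofReal_mul (by positivity),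
    ← ENNReal.ofReal_mul (Real.rpow_nonneg (by linarith) _)]
  apply ENNReal.ofReal_le_ofReal
  have := pointwise_bound (Kg s (x + (a - s) • unitVec θ)) (t - s) (a - s) (hK0 _ _) hr
    (by linarith)
  have e : t - s - (a - s) = t - a := by ring
  rw [e] at this
  linarith

lemma majorant_slice (Kg : ℝ → EuclideanSpace ℝ (Fin 2) → ℝ)
    (hK : Measurable (Function.uncurry Kg)) (x : EuclideanSpace ℝ (Fin 2))
    (t ε a Cf : ℝ) (ht : 0 < t) (hε : 0 < ε)
    (hf : ∀ a, 0 ≤ a → a ≤ t → coneFlux Kg a x ≤ ENNReal.ofReal Cf) :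
    ∫⁻ s, majorant Kg x t ε s a ≤
      ENNReal.ofReal Cf ^ (5 / 6 : ℝ) * ENNReal.ofReal ((2 * Real.pi) ^ (1 / 6 : ℝ)) *
      (Ioc 0 t).indicator (fun τ => ENNReal.ofReal
        (τ ^ (-(7 / 6) : ℝ) * (min t (τ / ε)) ^ (1 / 2 : ℝ))) (t - a) := by
  by_cases ha : 0 < a ∧ a < t
  swap
  · have : ∀ s, majorant Kg x t ε s a = 0 := fun s => by
      unfold majorant
      refine indicator_of_notMem ?_ _
      rintro ⟨h1, h2, h3⟩
      exact ha ⟨lt_of_lt_of_le h1 h2, h3⟩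
    simp [this]
  obtain ⟨ha0, hat⟩ := ha
  have hm : t - a ∈ Ioc 0 t := ⟨by linarith, by linarith⟩
  rw [indicator_of_mem hm]
  have e : ∀ s, majorant Kg x t ε s a = (Ioc 0 a).indicator (fun s =>
      ENNReal.ofReal ((t - a) ^ (-(7 / 6) : ℝ)) * ∫⁻ θ in Ioc (0 : ℝ) (2 * Real.pi),
      ENNReal.ofReal ((a - s) * Kg s (x + (a - s) • unitVec θ) ^ 2) ^ (5 / 6 : ℝ) *
      ({s : ℝ | ε * (t - s) ≤ t - a}.indicator
        (fun s => ENNReal.ofReal ((a - s) * (t - s))) s) ^ (1 / 6 : ℝ)) s := by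
    intro s
    unfold majorant
    by_cases h : s ∈ Ioc 0 a
    · have h2 : (s, a) ∈ {p : ℝ × ℝ | 0 < p.1 ∧ p.1 ≤ p.2 ∧ p.2 < t} := ⟨h.1, h.2, hat⟩
      rw [indicator_of_mem h, indicator_of_mem h2,
        ← lintegral_const_mul' _ _ ENNReal.ofReal_ne_top]
    · rw [indicator_of_notMem h, indicator_of_notMem]
      rintro ⟨h1, h2, -⟩
      exact h ⟨h1, h2⟩
  simp_rw [e]
  rw [lintegral_indicator measurableSet_Ioc, lintegral_const_mul' _ _ ENNReal.ofReal_ne_top]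
  refine (mul_le_mul_right (cone_bound Kg hK x t ε a Cf ht hε hat (hf a ha0.le hat.le)) _).trans ?_
  rw [ENNReal.ofReal_mul (Real.rpow_nonneg (by linarith) _)]
  apply le_of_eq
  ring

/-- **Interior flux estimate** (the bound for the integral (5.11) in the proof of
Proposition 5.4).  There are absolute constants `C > 0` and `k ≥ 0` such that if the
flux of `K_g` on every backward cone with tip `(a,x)`, `a ∈ [0,t]`, is at most `C_f`,
then for every `ε ∈ (0,1]`, with `ξ = (y−x)/(t−s)`,
`∫₀ᵗ∫_{|y−x|≤(1−ε)(t−s)} K_g^{5/3}/((t−s)(1−|ξ|²)^{7/6}) dy ds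
  ≤ C C_f^{5/6} (1+t)^k ε^{−1/6}`. -/
theorem interior_flux_estimate :
    ∃ C : ℝ≥0, 0 < C ∧ ∃ k : ℝ, 0 ≤ k ∧
      ∀ (t : ℝ), 0 < t → ∀ (x : EuclideanSpace ℝ (Fin 2)) (Cf : ℝ), 0 < Cf →
      ∀ (Kg : ℝ → EuclideanSpace ℝ (Fin 2) → ℝ),
        Measurable (Function.uncurry Kg) → (∀ s y, 0 ≤ Kg s y) →
        (∀ a, 0 ≤ a → a ≤ t → coneFlux Kg a x ≤ ENNReal.ofReal Cf) →
        ∀ ε : ℝ, 0 < ε → ε ≤ 1 →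
          (∫⁻ s in Ioc (0 : ℝ) t, ∫⁻ y in {y | dist y x ≤ (1 - ε) * (t - s)},
              ENNReal.ofReal (Kg s y ^ ((5 : ℝ) / 3) /
                ((t - s) * (1 - (dist y x / (t - s)) ^ 2) ^ ((7 : ℝ) / 6))))
            ≤ C * ENNReal.ofReal Cf ^ ((5 : ℝ) / 6) * ENNReal.ofReal (1 + t) ^ k
              * ENNReal.ofReal ε ^ (-(1 / 6) : ℝ) := by
  refine ⟨(9 * (2 * Real.pi) ^ (1 / 6 : ℝ)).toNNReal, ?_, 1 / 3, by norm_num, ?_⟩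
  · rw [Real.toNNReal_pos]
    positivity
  intro t ht x Cf hCf Kg hK hK0 hf ε hε hε1
  have hK' := measurable_majorant Kg hK x t ε
  calc _ ≤ ∫⁻ s in Ioc (0 : ℝ) t, ∫⁻ a, majorant Kg x t ε s a := by
        rw [← restrict_Ioo_eq_restrict_Ioc]
        exact setLIntegral_mono' measurableSet_Ioo fun s hs =>
          slice_bound Kg hK hK0 x t ε s hε hs.1 hs.2
    _ ≤ ∫⁻ s, ∫⁻ a, majorant Kg x t ε s a := setLIntegral_le_lintegral _ _
    _ = ∫⁻ a, ∫⁻ s, majorant Kg x t ε s a := lintegral_lintegral_swap hK'.aemeasurable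
    _ ≤ ∫⁻ a, ENNReal.ofReal Cf ^ (5 / 6 : ℝ) * ENNReal.ofReal ((2 * Real.pi) ^ (1 / 6 : ℝ)) *
      (Ioc 0 t).indicator (fun τ => ENNReal.ofReal
        (τ ^ (-(7 / 6) : ℝ) * (min t (τ / ε)) ^ (1 / 2 : ℝ))) (t - a) :=
        lintegral_mono fun a => majorant_slice Kg hK x t ε a Cf ht hε hf
    _ = ENNReal.ofReal Cf ^ (5 / 6 : ℝ) * ENNReal.ofReal ((2 * Real.pi) ^ (1 / 6 : ℝ)) *
        ∫⁻ τ in Ioc 0 t, ENNReal.ofReal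
        (τ ^ (-(7 / 6) : ℝ) * (min t (τ / ε)) ^ (1 / 2 : ℝ)) := by
        rw [lintegral_const_mul' _ _ (by finiteness), lintegral_sub_left_eq_self _ t,
          lintegral_indicator measurableSet_Ioc]
    _ ≤ ENNReal.ofReal Cf ^ (5 / 6 : ℝ) * ENNReal.ofReal ((2 * Real.pi) ^ (1 / 6 : ℝ)) *
        ENNReal.ofReal (9 * (1 + t) ^ (1 / 3 : ℝ) * ε ^ (-(1 / 6) : ℝ)) := by
        refine mul_le_mul_right ((radial_bound t ε ht hε hε1).trans ?_) _
        apply ENNReal.ofReal_le_ofReal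
        gcongr
        linarith
    _ = _ := by
        rw [ENNReal.ofReal_rpow_of_pos hε, ENNReal.ofReal_rpow_of_pos (by linarith : 0 < 1 + t),
          ENNReal.ofReal_mul (by positivity), ENNReal.ofReal_mul (by norm_num)]
        change _ = ENNReal.ofReal _ * _ * _ * _
        rw [ENNReal.ofReal_mul (by norm_num)]
        ring
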